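/- Let s ≥ 1 and let m_1 < m_2 < ⋯ < m_{2s+1} be integers with m_1 ≥ 0, and let q be the partition [(2m_{2s+1}+1)(2m_{2s}+1)⋯(2m_2+1)(2m_1+1)]. Then the Barbasch–Vogan dual of q is η(q) = [(2s+1)^{2m_1} (2s)^{2m_2+2−2m_1} (2s−1)^{2m_3−2m_2−2} (2s−2)^{2m_4+2−2m_3} (2s−3)^{2m_5−2m_4−2} ⋯ (2)^{2m_{2s}+2−2m_{2s−1}} (1)^{2m_{2s+1}−2m_{2s}−2}], i.e. the partition in which the part 2s+1−j occurs with multiplicity 2m_{j+1}+2−2m_j when j ≥ 1 is odd (setting this to 2m_1 when the convention gives the part 2s+1), and with multiplicity 2m_{j+1}−2m_j−2 when j is even; explicitly, the part 2s+1 occurs 2m_1 times, the part 2s+1−j occurs 2m_{j+1}+2−2m_j times for odd j with 1 ≤ j ≤ 2s, and the part 2s+1−j occurs 2m_{j+1}−2m_j−2 times for even j with 2 ≤ j ≤ 2s (parts with multiplicity 0 are omitted). -/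

import Mathlib

/-!
The partition `q⁻` has parts `2 m_{2s+1} + 1, …, 2 m_2 + 1, 2 m_1`.  Its Sp-collapse is
`c = [2 m_{2s+1}, 2 m_{2s} + 2, …, 2 m_3, 2 m_2 + 2, 2 m_1]`: all parts of `c` are even, so `c` is
symplectic, and its partial sums agree with those of `q⁻` except at the odd indices `k < 2s`, where
they are smaller by one (`sum_collapsePart`).  No symplectic partition `d` dominated by `q⁻` can
reach the partial sum of `q⁻` at such a `k`: that sum is odd, while equality would force a strict
drop of `d` after its `k`-th part, and at a strict drop the partial sums of a symplectic partition
are even (`even_sum_of_drop`, `sum_le_sum_collapsePart`).  So the collapse has the partial sums of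
`c`, hence the same nonzero parts.

Partitions are handled through antitone sequences `f : ℕ → ℕ` that vanish from some index on; the
partial sums of `f` are then the values of `topSum` (`topSum_map_range`).  In these terms the
transpose has the part `a + 1` with multiplicity `f a - f (a + 1)`
(`count_transposeP_map_range`), and reading this off for `c` gives the stated multiplicities.
-/

/-- The sum of the `k` largest elements of a multiset of natural numbers. -/
def Multiset.topSum (p : Multiset ℕ) (k : ℕ) : ℕ :=
  (((p.sort (· ≤ ·)).reverse).take k).sum

/-- Dominance order on partitions (finite multisets of positive integers) of the same
number: `Dominates p q` means `p` and `q` partition the same integer and, for every `k`,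
the sum of the `k` largest parts of `p` is at least that of `q`. -/
def Dominates (p q : Multiset ℕ) : Prop :=
  p.sum = q.sum ∧ ∀ k, q.topSum k ≤ p.topSum k

/-- A partition is symplectic if each of its odd parts occurs with even multiplicity. -/
def IsSymplectic (p : Multiset ℕ) : Prop :=
  ∀ a, Odd a → Even (p.count a)

/-- The transpose of a partition: the `i`-th part (for `i ≥ 1`) is the number of parts
that are `≥ i`; zero parts are discarded. -/
def transposeP (p : Multiset ℕ) : Multiset ℕ :=
  ((Multiset.range p.sum).map fun i => (p.filter fun a => i + 1 ≤ a).card).filter (0 < ·)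

/-- `qminus q` is `q⁻`: one occurrence of the smallest part `a` of `q` is replaced by
`a - 1` (deleted if `a = 1`). -/
def qminus (q : Multiset ℕ) : Multiset ℕ :=
  match (q.sort (· ≤ ·)).head? with
  | none => 0
  | some a => if a ≤ 1 then q.erase a else (a - 1) ::ₘ q.erase a

/-- `IsSpCollapse p c` : `c` is the Sp-collapse of `p`, i.e. the greatest symplectic
partition dominated by `p` in the dominance order. -/
def IsSpCollapse (p c : Multiset ℕ) : Prop :=
  0 ∉ c ∧ IsSymplectic c ∧ Dominates p c ∧
    ∀ q : Multiset ℕ, 0 ∉ q → IsSymplectic q → Dominates p q → Dominates c q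

/-- A symplectic partition is special if it has an even number of even parts between any
two consecutive (distinct) odd parts, and an even number of even parts greater than its
largest odd part. -/
def IsSpecial (p : Multiset ℕ) : Prop :=
  IsSymplectic p ∧
    (∀ a b, a ∈ p → b ∈ p → Odd a → Odd b → a < b →
        (∀ c ∈ p, Odd c → ¬(a < c ∧ c < b)) →
        Even ((p.filter fun x => Even x ∧ a < x ∧ x < b).card)) ∧
    (∀ a, a ∈ p → Odd a → (∀ c ∈ p, Odd c → c ≤ a) →
        Even ((p.filter fun x => Even x ∧ a < x).card))

/-- `IsSpExpansion p e` : `e` is the Sp-expansion of `p`, i.e. the smallest special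
symplectic partition dominating `p` in the dominance order. -/
def IsSpExpansion (p e : Multiset ℕ) : Prop :=
  0 ∉ e ∧ IsSpecial e ∧ Dominates e p ∧
    ∀ q : Multiset ℕ, 0 ∉ q → IsSpecial q → Dominates q p → Dominates q e

/-! ### Partitions as antitone sequences -/

theorem topSum_map_range (f : ℕ → ℕ) (hf : Antitone f) (n : ℕ) (h0 : ∀ i, n ≤ i → f i = 0)
    (k : ℕ) : ((Multiset.range n).map f).topSum k = ∑ i ∈ Finset.range k, f i := by
  have hsort : (((Multiset.range n).map f).sort (· ≤ ·)).reverse = (List.range n).map f := by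
    refine List.Perm.eq_of_pairwise (le := (· ≥ ·)) (fun a b _ _ h1 h2 => le_antisymm h2 h1)
      ?_ ?_ ?_
    · rw [List.pairwise_reverse]
      exact Multiset.pairwise_sort _ _
    · rw [List.pairwise_map]
      exact List.pairwise_lt_range.imp fun h => hf h.le
    · refine (List.reverse_perm _).trans ?_
      rw [← Multiset.coe_eq_coe, Multiset.sort_eq]
      rfl
  have hsum : ∀ l, ((List.range l).map f).sum = ∑ i ∈ Finset.range l, f i := fun _ => rfl
  rw [Multiset.topSum, hsort, ← List.map_take, List.take_range, hsum]
  refine Finset.sum_subset (by intro i; simp; omega) ?_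
  intro i hi hi'
  simp only [Finset.mem_range] at hi hi'
  exact h0 i (by omega)

/-- Every finite multiset of naturals is listed in decreasing order by an antitone sequence
padded with zeros. -/
theorem exists_antitone_parts (d : Multiset ℕ) :
    ∃ (n : ℕ) (f : ℕ → ℕ), Antitone f ∧ (∀ i, n ≤ i → f i = 0) ∧
      d = (Multiset.range n).map f := by
  have hsorted : ((d.sort (· ≤ ·)).reverse).Pairwise (· ≥ ·) := by
    rw [List.pairwise_reverse]
    exact Multiset.pairwise_sort _ _
  have hd : (((d.sort (· ≤ ·)).reverse : List ℕ) : Multiset ℕ) = d := by simp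
  generalize (d.sort (· ≤ ·)).reverse = L at hsorted hd
  refine ⟨L.length, fun i => L.getD i 0, ?_, ?_, ?_⟩
  · intro i j hij
    by_cases hj : j < L.length
    · rcases hij.eq_or_lt with rfl | hlt
      · exact le_rfl
      · have := List.pairwise_iff_getElem.1 hsorted i j (hlt.trans hj) hj hlt
        change L.getD j 0 ≤ L.getD i 0
        rwa [List.getD_eq_getElem _ _ hj, List.getD_eq_getElem _ _ (hlt.trans hj)]
    · change L.getD j 0 ≤ L.getD i 0
      simp only [List.getD_eq_default _ _ (not_lt.1 hj), Nat.zero_le]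
  · intro i hi
    simp [hi]
  · rw [← hd]
    simp only [Multiset.range, Multiset.map_coe, Multiset.coe_eq_coe]
    refine List.Perm.of_eq (List.ext_getElem (by simp) ?_)
    intro i h1 h2
    simp [h1]

theorem even_sum_filter_of_isSymplectic (d : Multiset ℕ) (hd : IsSymplectic d) (a : ℕ) :
    Even (d.filter fun x => a ≤ x).sum := by
  rw [Finset.sum_multiset_count]
  refine Finset.even_sum _ fun x hx => ?_
  have hax : a ≤ x := by
    simp only [Multiset.mem_toFinset, Multiset.mem_filter] at hx
    exact hx.2
  rw [Multiset.count_filter_of_pos hax, smul_eq_mul]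
  rcases Nat.even_or_odd x with h | h
  · exact h.mul_left _
  · exact (hd x h).mul_right _

/-- In a symplectic partition the sum of the first `k + 1` parts is even whenever the next part
is strictly smaller: those parts are exactly the parts `≥ f k`, each odd value among them being
taken with its full, even, multiplicity. -/
theorem even_sum_of_drop (f : ℕ → ℕ) (hf : Antitone f) (n : ℕ) (h0 : ∀ i, n ≤ i → f i = 0)
    (hd : IsSymplectic ((Multiset.range n).map f)) (k : ℕ) (hk : f (k + 1) < f k) :
    Even (∑ i ∈ Finset.range (k + 1), f i) := by
  have hev := even_sum_filter_of_isSymplectic _ hd (f k)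
  have hkn : k < n := by
    by_contra h
    have := h0 k (by omega)
    omega
  rw [Multiset.filter_map] at hev
  convert hev using 1
  change _ = ∑ i ∈ (Finset.range n).filter (fun i => f k ≤ f i), f i
  congr 1
  ext i
  simp only [Finset.mem_range, Finset.mem_filter]
  constructor
  · intro h
    exact ⟨by omega, hf (by omega)⟩
  · rintro ⟨_, h⟩
    by_contra hi
    have := hf (show k + 1 ≤ i by omega)
    omega

/-- The `i`-th entry of the transpose, the number of parts `≥ i + 1` with `i` counted from `0`,
equals `a + 1` exactly for `i` in the interval `[f (a + 1), f a)`. -/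
theorem count_transposeP_map_range (f : ℕ → ℕ) (hf : Antitone f) (n : ℕ)
    (h0 : ∀ i, n ≤ i → f i = 0) (a : ℕ) :
    (transposeP ((Multiset.range n).map f)).count (a + 1) = f a - f (a + 1) := by
  have hN : f a ≤ ((Multiset.range n).map f).sum := by
    by_cases ha : a < n
    · exact Multiset.single_le_sum (fun _ _ => Nat.zero_le _) _
        (Multiset.mem_map_of_mem f (Multiset.mem_range.2 ha))
    · simp [h0 a (by omega)]
  unfold transposeP
  generalize ((Multiset.range n).map f).sum = N at hN
  rw [Multiset.count_filter_of_pos (Nat.succ_pos a), Multiset.count_map]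
  have hcard : ∀ i, (((Multiset.range n).map f).filter fun b => i + 1 ≤ b).card
      = ((Finset.range n).filter fun j => i + 1 ≤ f j).card := by
    intro i
    rw [Multiset.filter_map, Multiset.card_map]
    rfl
  have key : ∀ i, a + 1 = (((Multiset.range n).map f).filter fun b => i + 1 ≤ b).card ↔
      f (a + 1) ≤ i ∧ i < f a := by
    intro i
    rw [hcard]
    -- The positions of the parts `≥ i + 1` form an initial segment of the naturals.
    have hex : ∃ j, f j ≤ i := ⟨n, by simp [h0 n le_rfl]⟩
    have hseg : (Finset.range n).filter (fun j => i + 1 ≤ f j) = Finset.range (Nat.find hex) := by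
      ext j
      simp only [Finset.mem_filter, Finset.mem_range, Nat.lt_find_iff]
      constructor
      · rintro ⟨_, h⟩ l hl
        have := hf hl
        omega
      · intro h
        have hj := h j le_rfl
        refine ⟨?_, by omega⟩
        by_contra hjn
        have := h0 j (by omega)
        omega
    rw [hseg, Finset.card_range, eq_comm, Nat.find_eq_iff]
    constructor
    · rintro ⟨h1, h2⟩
      exact ⟨h1, by have := h2 a (by omega); omega⟩
    · rintro ⟨h1, h2⟩
      refine ⟨h1, fun l hl => ?_⟩
      have := hf (show l ≤ a by omega)
      omega
  simp only [key]
  change ((Finset.range N).filter fun i => f (a + 1) ≤ i ∧ i < f a).card = _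
  rw [← Nat.card_Ico]
  congr 1
  ext i
  simp only [Finset.mem_filter, Finset.mem_range, Finset.mem_Ico]
  omega

/-! ### The Sp-collapse of `q⁻` -/

/-- The parts of `q⁻` in decreasing order, padded with zeros:
`2 m_{2s+1} + 1, …, 2 m_2 + 1, 2 m_1`. -/
def minusPart (s : ℕ) (m : ℕ → ℕ) (i : ℕ) : ℕ :=
  if 2 * s < i then 0 else 2 * m (2 * s + 1 - i) + if i < 2 * s then 1 else 0

/-- The parts of the collapse of `q⁻` in decreasing order, padded with zeros:
`2 m_{2s+1}, 2 m_{2s} + 2, 2 m_{2s-1}, …, 2 m_2 + 2, 2 m_1`. -/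
def collapsePart (s : ℕ) (m : ℕ → ℕ) (i : ℕ) : ℕ :=
  if 2 * s < i then 0 else 2 * m (2 * s + 1 - i) + if i % 2 = 1 then 2 else 0

theorem minusPart_succ_lt {s : ℕ} {m : ℕ → ℕ}
    (hm : ∀ i j, 1 ≤ i → i < j → j ≤ 2 * s + 1 → m i < m j) {i : ℕ} (hi : i < 2 * s) :
    minusPart s m (i + 1) < minusPart s m i := by
  have := hm (2 * s + 1 - (i + 1)) (2 * s + 1 - i) (by omega) (by omega) (by omega)
  unfold minusPart
  split_ifs <;> omega

theorem antitone_minusPart {s : ℕ} {m : ℕ → ℕ}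
    (hm : ∀ i j, 1 ≤ i → i < j → j ≤ 2 * s + 1 → m i < m j) : Antitone (minusPart s m) := by
  refine antitone_nat_of_succ_le fun i => ?_
  by_cases hi : i < 2 * s
  · exact (minusPart_succ_lt hm hi).le
  · simp [minusPart, show 2 * s < i + 1 by omega]

theorem antitone_collapsePart {s : ℕ} {m : ℕ → ℕ}
    (hm : ∀ i j, 1 ≤ i → i < j → j ≤ 2 * s + 1 → m i < m j) : Antitone (collapsePart s m) := by
  refine antitone_nat_of_succ_le fun i => ?_
  by_cases hi : i < 2 * s
  · have := hm (2 * s + 1 - (i + 1)) (2 * s + 1 - i) (by omega) (by omega) (by omega)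
    unfold collapsePart
    split_ifs <;> omega
  · simp [collapsePart, show 2 * s < i + 1 by omega]

theorem sum_collapsePart (s : ℕ) (m : ℕ → ℕ) (k : ℕ) :
    (∑ i ∈ Finset.range k, collapsePart s m i) + (if k % 2 = 1 ∧ k < 2 * s then 1 else 0)
      = ∑ i ∈ Finset.range k, minusPart s m i := by
  induction k with
  | zero => simp
  | succ k ih =>
    rw [Finset.sum_range_succ, Finset.sum_range_succ, ← ih]
    unfold collapsePart minusPart
    split_ifs <;> omega

theorem odd_sum_minusPart (s : ℕ) (m : ℕ → ℕ) (k : ℕ) (hk : k % 2 = 1) (hks : k < 2 * s) :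
    ¬ Even (∑ i ∈ Finset.range k, minusPart s m i) := by
  rw [← sum_collapsePart, if_pos ⟨hk, hks⟩, Nat.not_even_iff_odd]
  refine Even.add_one (Finset.even_sum _ fun i _ => ?_)
  unfold collapsePart
  split_ifs
  · exact Even.zero
  · exact ⟨m (2 * s + 1 - i) + 1, by ring⟩
  · exact ⟨m (2 * s + 1 - i), by ring⟩

/-- The number of parts of `q⁻`, and of its collapse: the last part `2 m_1` is absent when
`m_1 = 0`. -/
def numParts (s : ℕ) (m : ℕ → ℕ) : ℕ := if m 1 = 0 then 2 * s else 2 * s + 1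

theorem minusPart_eq_zero {s : ℕ} {m : ℕ → ℕ} (i : ℕ) (hi : numParts s m ≤ i) :
    minusPart s m i = 0 := by
  unfold minusPart numParts at *
  split_ifs at *
  all_goals first | rfl | omega | skip
  rw [show 2 * s + 1 - i = 1 by omega]
  omega

theorem collapsePart_eq_zero {s : ℕ} {m : ℕ → ℕ} (i : ℕ) (hi : numParts s m ≤ i) :
    collapsePart s m i = 0 := by
  unfold collapsePart numParts at *
  split_ifs at *
  all_goals first | rfl | omega | skip
  rw [show 2 * s + 1 - i = 1 by omega]
  omega

theorem collapsePart_pos {s : ℕ} {m : ℕ → ℕ}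
    (hm : ∀ i j, 1 ≤ i → i < j → j ≤ 2 * s + 1 → m i < m j) (i : ℕ) (hi : i < numParts s m) :
    0 < collapsePart s m i := by
  have h1 : i < 2 * s → m 1 < m (2 * s + 1 - i) := fun h =>
    hm 1 (2 * s + 1 - i) le_rfl (by omega) (by omega)
  have h2 : i = 2 * s → m (2 * s + 1 - i) = m 1 := by
    rintro rfl
    congr 1
    omega
  unfold collapsePart numParts at *
  split_ifs at * <;> omega

theorem map_range_reflect (f : ℕ → ℕ) (n : ℕ) :
    (Multiset.range n).map (fun i => f (n - 1 - i)) = (Multiset.range n).map f := by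
  have h := Finset.sum_range_reflect (fun i => ({f i} : Multiset ℕ)) n
  have hg : ∀ g : ℕ → ℕ,
      ∑ i ∈ Finset.range n, ({g i} : Multiset ℕ) = (Multiset.range n).map g := by
    intro g
    change ((Multiset.range n).map fun i => ({g i} : Multiset ℕ)).sum = _
    rw [← Multiset.sum_map_singleton ((Multiset.range n).map g), Multiset.map_map]
    rfl
  rwa [hg (fun i => f (n - 1 - i)), hg f] at h

theorem qminus_eq {s : ℕ} {m : ℕ → ℕ}
    (hm : ∀ i j, 1 ≤ i → i < j → j ≤ 2 * s + 1 → m i < m j) :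
    qminus ((Multiset.range (2 * s + 1)).map fun i => 2 * m (i + 1) + 1)
      = (Multiset.range (numParts s m)).map (minusPart s m) := by
  have hsort : ((Multiset.range (2 * s + 1)).map fun i => 2 * m (i + 1) + 1).sort (· ≤ ·)
      = (List.range (2 * s + 1)).map fun i => 2 * m (i + 1) + 1 := by
    refine List.Perm.eq_of_pairwise (le := (· ≤ ·)) (fun a b _ _ h1 h2 => le_antisymm h1 h2)
      (Multiset.pairwise_sort _ _) ?_ ?_
    · rw [List.pairwise_map]
      refine List.pairwise_lt_range.imp_of_mem fun {a b} _ hb h => ?_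
      have := hm (a + 1) (b + 1) (by omega) (by omega) (by have := List.mem_range.1 hb; omega)
      omega
    · rw [← Multiset.coe_eq_coe, Multiset.sort_eq]
      rfl
  have hhead : (((Multiset.range (2 * s + 1)).map fun i => 2 * m (i + 1) + 1).sort (· ≤ ·)).head?
      = some (2 * m 1 + 1) := by
    rw [hsort, List.range_succ_eq_map]
    simp
  have hcons : ((Multiset.range (2 * s + 1)).map fun i => 2 * m (i + 1) + 1)
      = (2 * m 1 + 1) ::ₘ (Multiset.range (2 * s)).map (minusPart s m) := by
    rw [← map_range_reflect (minusPart s m)]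
    simp only [Multiset.range, List.range_succ_eq_map, Multiset.map_coe, Multiset.cons_coe,
      List.map_cons, List.map_map, Multiset.coe_eq_coe]
    refine List.Perm.of_eq (congrArg _ (List.map_congr_left fun i hi => ?_))
    have hi := List.mem_range.1 hi
    have h2 : 2 * s + 1 - (2 * s - 1 - i) = i + 1 + 1 := by omega
    simp only [Function.comp, minusPart, h2]
    rw [if_neg (by omega), if_pos (by omega)]
  unfold qminus
  rw [hhead]
  simp only [hcons, Multiset.erase_cons_head, numParts]
  by_cases h : m 1 = 0
  · simp [h]
  · rw [if_neg (by omega), if_neg h, Multiset.range_succ, Multiset.map_cons]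
    simp [minusPart]

theorem dominates_collapse {s : ℕ} {m : ℕ → ℕ}
    (hm : ∀ i j, 1 ≤ i → i < j → j ≤ 2 * s + 1 → m i < m j) :
    Dominates ((Multiset.range (numParts s m)).map (minusPart s m))
      ((Multiset.range (numParts s m)).map (collapsePart s m)) := by
  constructor
  · change ∑ i ∈ Finset.range (numParts s m), minusPart s m i
      = ∑ i ∈ Finset.range (numParts s m), collapsePart s m i
    rw [← sum_collapsePart, if_neg (by unfold numParts; split_ifs <;> omega), add_zero]
  · intro k
    rw [topSum_map_range _ (antitone_collapsePart hm) _ collapsePart_eq_zero,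
      topSum_map_range _ (antitone_minusPart hm) _ minusPart_eq_zero, ← sum_collapsePart]
    omega

theorem isSymplectic_collapse (s : ℕ) (m : ℕ → ℕ) (n : ℕ) :
    IsSymplectic ((Multiset.range n).map (collapsePart s m)) := by
  intro a ha
  rw [Multiset.count_eq_zero_of_notMem]
  · exact Even.zero
  · intro h
    obtain ⟨i, -, rfl⟩ := Multiset.mem_map.1 h
    unfold collapsePart at ha
    rw [Nat.odd_iff] at ha
    split_ifs at ha <;> omega

/-- A symplectic partition (listed by `f`) dominated by `q⁻` is dominated by `collapsePart`.
At an odd index `k < 2s` equality with the partial sum of `q⁻`, which is odd, would force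
`f (k - 1) ≥ minusPart (k - 1) > minusPart k ≥ f k`, against `even_sum_of_drop`. -/
theorem sum_le_sum_collapsePart {s : ℕ} {m : ℕ → ℕ}
    (hm : ∀ i j, 1 ≤ i → i < j → j ≤ 2 * s + 1 → m i < m j)
    (f : ℕ → ℕ) (hf : Antitone f) (n : ℕ) (h0 : ∀ i, n ≤ i → f i = 0)
    (hd : IsSymplectic ((Multiset.range n).map f))
    (hle : ∀ k, ∑ i ∈ Finset.range k, f i ≤ ∑ i ∈ Finset.range k, minusPart s m i) (k : ℕ) :
    ∑ i ∈ Finset.range k, f i ≤ ∑ i ∈ Finset.range k, collapsePart s m i := by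
  have hk := hle k
  have hc := sum_collapsePart s m k
  by_cases hodd : k % 2 = 1 ∧ k < 2 * s
  · rw [if_pos hodd] at hc
    by_contra hlt
    have heq : ∑ i ∈ Finset.range k, f i = ∑ i ∈ Finset.range k, minusPart s m i := by omega
    obtain ⟨l, rfl⟩ : ∃ l, k = l + 1 := ⟨k - 1, by omega⟩
    refine odd_sum_minusPart s m (l + 1) hodd.1 hodd.2 (heq ▸ even_sum_of_drop f hf n h0 hd l ?_)
    have h1 := hle l
    have h2 := hle (l + 2)
    have h3 := minusPart_succ_lt hm (i := l) (by omega)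
    rw [Finset.sum_range_succ _ (l + 1), Finset.sum_range_succ _ (l + 1)] at h2
    have heq' := heq
    rw [Finset.sum_range_succ, Finset.sum_range_succ] at heq'
    omega
  · rw [if_neg hodd] at hc
    omega

/-- Let `s ≥ 1` and `m 1 < m 2 < ⋯ < m (2s+1)` be nonnegative integers,
and let `q = [(2 m (2s+1) + 1) ⋯ (2 m 2 + 1)(2 m 1 + 1)]`.  Then the Barbasch–Vogan dual
`η(q) = ((q⁻)_Sp)ᵗ` is the partition in which the part `2s+1` occurs `2 * m 1` times,
the part `2s+1−j` occurs `2 m (j+1) + 2 − 2 m j` times for odd `j` with `1 ≤ j ≤ 2s`,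
and `2 m (j+1) − 2 m j − 2` times for even `j` with `2 ≤ j ≤ 2s` (multiplicity-0 parts
omitted). -/
theorem barbaschVogan_dual_explicit
    (s : ℕ) (hs : 1 ≤ s)
    (m : ℕ → ℕ) (hm : ∀ i j, 1 ≤ i → i < j → j ≤ 2 * s + 1 → m i < m j)
    (d : Multiset ℕ)
    (hd : IsSpCollapse
      (qminus ((Multiset.range (2 * s + 1)).map fun i => 2 * m (i + 1) + 1)) d) :
    transposeP d =
      Multiset.replicate (2 * m 1) (2 * s + 1) +
        ∑ j ∈ Finset.range (2 * s),
          Multiset.replicate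
            (if (j + 1) % 2 = 1 then 2 * m (j + 2) + 2 - 2 * m (j + 1)
             else 2 * m (j + 2) - 2 * m (j + 1) - 2)
            (2 * s - j) := by
  rw [qminus_eq hm] at hd
  obtain ⟨-, hsymp, ⟨-, hdom⟩, hmax⟩ := hd
  obtain ⟨n, f, hf, h0, rfl⟩ := exists_antitone_parts d
  have hle := sum_le_sum_collapsePart hm f hf n h0 hsymp (fun k => by
    have := hdom k
    rwa [topSum_map_range f hf n h0,
      topSum_map_range _ (antitone_minusPart hm) _ minusPart_eq_zero] at this)
  have hge := (hmax ((Multiset.range (numParts s m)).map (collapsePart s m)) (by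
    intro h
    obtain ⟨i, hi, h⟩ := Multiset.mem_map.1 h
    have := collapsePart_pos hm i (Multiset.mem_range.1 hi)
    omega) (isSymplectic_collapse s m _) (dominates_collapse hm)).2
  have hfc : ∀ i, f i = collapsePart s m i := by
    have hsum : ∀ k, ∑ i ∈ Finset.range k, f i = ∑ i ∈ Finset.range k, collapsePart s m i := by
      intro k
      have := hge k
      rw [topSum_map_range f hf n h0,
        topSum_map_range _ (antitone_collapsePart hm) _ collapsePart_eq_zero] at this
      exact le_antisymm (hle k) this
    intro i
    have h1 := hsum (i + 1)
    rw [Finset.sum_range_succ, Finset.sum_range_succ, hsum i] at h1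
    omega
  ext a
  rw [Multiset.count_add, Multiset.count_sum']
  simp only [Multiset.count_replicate]
  rcases a with _ | a
  · rw [Finset.sum_eq_zero (fun j hj => if_neg (by have := Finset.mem_range.1 hj; omega)),
      if_neg (by omega)]
    exact Multiset.count_eq_zero_of_notMem (by simp [transposeP])
  · rw [count_transposeP_map_range f hf n h0, hfc, hfc]
    by_cases ha : a < 2 * s
    · -- The part `a + 1 = 2s - j` comes from the single index `j = 2s - 1 - a`.
      rw [if_neg (by omega), Finset.sum_eq_single (2 * s - 1 - a)
        (fun j hj hne => if_neg (by have := Finset.mem_range.1 hj; omega))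
        (fun h => absurd (Finset.mem_range.2 (by omega)) h), if_pos (by omega)]
      have e1 : 2 * s - 1 - a + 2 = 2 * s + 1 - a := by omega
      have e2 : 2 * s - 1 - a + 1 = 2 * s + 1 - (a + 1) := by omega
      simp only [e1, e2, collapsePart]
      split_ifs <;> omega
    · rw [Finset.sum_eq_zero (fun j hj => if_neg (by have := Finset.mem_range.1 hj; omega))]
      by_cases ha' : a = 2 * s
      · subst ha'
        simp [collapsePart]
      · rw [if_neg (by omega)]
        simp [collapsePart, show 2 * s < a by omega]
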